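/- Let G be a finite simple graph on n vertices that is C4-free, and let A be any Hermitian weighted adjacency matrix of G. Then n_{≥0}(A) ≥ β n, where β = √3 − 3/2. -/

import Mathlib

open Matrix Finset

/-- A graph is `C4`-free if it has no cycle of length 4 as a (not necessarily induced)
subgraph: there are no four pairwise distinct vertices `a, b, c, d` with
`ab`, `bc`, `cd`, `da` all edges. -/
def C4Free {V : Type*} (G : SimpleGraph V) : Prop :=
  ∀ a b c d : V, a ≠ b → a ≠ c → a ≠ d → b ≠ c → b ≠ d → c ≠ d →
    G.Adj a b → G.Adj b c → G.Adj c d → ¬ G.Adj d a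

/-!
The quartic `2x + 3x² - x⁴ = x(2 - x)(x + 1)²` is non-positive for `x ≤ 0` and is at most
`c = 9/4 + 3√3/2` everywhere, with equality at `(1 + √3)/2`. Summing it over the eigenvalues of `A`
gives `2 tr A + 3 tr A² - tr A⁴ ≤ c · n_{≥0}(A)`. Here `tr A = 0`, `tr A² = ∑ rᵢ` for the weighted
degrees `rᵢ`, and `tr A⁴ ≤ 2 ∑ rᵢ²`, because in a `C4`-free graph an off-diagonal entry of `A²` has
at most one non-zero summand. Hence `∑ (3 rᵢ - 2 rᵢ²) ≤ c · n_{≥0}(A)`, and if all `rᵢ` equal `3/4`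
this is the claim, as `9/8 = β c`.

Replacing `A` by `D A D` with `D` diagonal and positive does not change the inertia. If the support
of `A` contains a permutation, the potential whose critical points are the scalings with all
weighted degrees equal to `3/4` is bounded below, so it has almost critical points and the weighted
degrees can be brought arbitrarily close to `3/4`. Otherwise Hall's theorem yields a set `T`,
independent in the support of `A`, with fewer than `|T|` neighbours. Deleting `T` and its neighbours
removes fewer than `2|T|` vertices and lowers `n_{≥0}` by at least `|T|`, so induction applies since
`β ≤ 1/2`.
-/

section NonnegIndex

open scoped ComplexOrder

variable {𝕜 V W : Type*} [RCLike 𝕜] [Fintype V] [DecidableEq V] [Fintype W] [DecidableEq W]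

open scoped Classical in
/-- The number `n_{≥0}(A)` of non-negative real eigenvalues of `A`, counted with algebraic
multiplicity as roots of the characteristic polynomial. Here `0 ≤ z` is the order of
`ComplexOrder`, which forces `z` to be real. -/
noncomputable def nonnegIndex (A : Matrix V V 𝕜) : ℕ :=
  A.charpoly.roots.countP (0 ≤ ·)

theorem nonnegIndex_eq_card {A : Matrix V V 𝕜} (hA : A.IsHermitian) :
    nonnegIndex A = Fintype.card {i // 0 ≤ hA.eigenvalues i} := by
  simp [nonnegIndex, hA.roots_charpoly_eq_eigenvalues, Multiset.countP_map, Fintype.card_subtype,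
    Finset.card_def]

theorem nonnegIndex_zero : nonnegIndex (0 : Matrix V V 𝕜) = Fintype.card V := by
  simp [nonnegIndex, Multiset.countP_nsmul, ← Multiset.cons_zero]

theorem nonnegIndex_fromBlocks_zero₁₂ (A : Matrix V V 𝕜) (C : Matrix W V 𝕜) (D : Matrix W W 𝕜) :
    nonnegIndex (fromBlocks A 0 C D) = nonnegIndex A + nonnegIndex D := by
  rw [nonnegIndex, charpoly_fromBlocks_zero₁₂,
    Polynomial.roots_mul (A.charpoly_monic.mul D.charpoly_monic).ne_zero, Multiset.countP_add]
  rfl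

theorem re_dotProduct_mulVec_eq_sum_eigenvalues {A : Matrix V V 𝕜} (hA : A.IsHermitian)
    (x : V → 𝕜) :
    RCLike.re (star x ⬝ᵥ A *ᵥ x) =
      ∑ i, hA.eigenvalues i * ‖(star (hA.eigenvectorUnitary : Matrix V V 𝕜) *ᵥ x) i‖ ^ 2 := by
  set U := (hA.eigenvectorUnitary : Matrix V V 𝕜)
  set D : Matrix V V 𝕜 := diagonal (RCLike.ofReal ∘ hA.eigenvalues)
  calc RCLike.re (star x ⬝ᵥ A *ᵥ x) = RCLike.re (star (star U *ᵥ x) ⬝ᵥ D *ᵥ (star U *ᵥ x)) := by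
        conv_lhs => rw [hA.spectral_theorem, Unitary.conjStarAlgAut_apply]
        simp only [star_eq_conjTranspose, star_mulVec, conjTranspose_conjTranspose, mulVec_mulVec,
          dotProduct_mulVec, vecMul_vecMul, Matrix.mul_assoc, U, D]
    _ = _ := by
        simp only [dotProduct, D, mulVec_diagonal, Pi.star_apply, map_sum]
        refine sum_congr rfl fun i _ => ?_
        rw [mul_left_comm, Function.comp_apply, RCLike.re_ofReal_mul, RCLike.star_def,
          RCLike.conj_mul, ← RCLike.ofReal_pow, RCLike.ofReal_re]

theorem finrank_le_nonnegIndex {A : Matrix V V 𝕜} (hA : A.IsHermitian) {P : Submodule 𝕜 (V → 𝕜)}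
    (hP : ∀ x ∈ P, 0 ≤ RCLike.re (star x ⬝ᵥ A *ᵥ x)) :
    Module.finrank 𝕜 P ≤ nonnegIndex A := by
  set U := (hA.eigenvectorUnitary : Matrix V V 𝕜)
  let coords : P →ₗ[𝕜] {i // 0 ≤ hA.eigenvalues i} → 𝕜 :=
    LinearMap.funLeft 𝕜 𝕜 Subtype.val ∘ₗ (star U).mulVecLin ∘ₗ P.subtype
  have h_inj : Function.Injective coords := by
    rw [injective_iff_map_eq_zero]
    intro x hx
    have h_nonneg (i) (hi : 0 ≤ hA.eigenvalues i) : (star U *ᵥ (x : V → 𝕜)) i = 0 :=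
      congrFun hx ⟨i, hi⟩
    have h_nonpos : ∀ i ∈ univ, hA.eigenvalues i * ‖(star U *ᵥ (x : V → 𝕜)) i‖ ^ 2 ≤ 0 := by
      intro i _
      rcases le_or_gt 0 (hA.eigenvalues i) with hi | hi
      · simp [h_nonneg i hi]
      · exact mul_nonpos_of_nonpos_of_nonneg hi.le (sq_nonneg _)
    have h_sum := hP x x.2
    rw [re_dotProduct_mulVec_eq_sum_eigenvalues hA] at h_sum
    have h_zero := (sum_eq_zero_iff_of_nonpos h_nonpos).1 (h_sum.antisymm' (sum_nonpos h_nonpos))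
    have h_coord : star U *ᵥ (x : V → 𝕜) = 0 := by
      ext i
      rcases le_or_gt 0 (hA.eigenvalues i) with hi | hi
      · exact h_nonneg i hi
      · simpa [hi.ne] using h_zero i (mem_univ i)
    have hUU : U * star U = 1 := Unitary.mul_star_self_of_mem hA.eigenvectorUnitary.2
    rw [← Submodule.coe_eq_zero, ← one_mulVec (x : V → 𝕜), ← hUU, ← mulVec_mulVec, h_coord,
      mulVec_zero]
  simpa [nonnegIndex_eq_card hA] using LinearMap.finrank_le_finrank_of_injective h_inj

theorem exists_finrank_eq_nonnegIndex {A : Matrix V V 𝕜} (hA : A.IsHermitian) :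
    ∃ P : Submodule 𝕜 (V → 𝕜), Module.finrank 𝕜 P = nonnegIndex A ∧
      ∀ x ∈ P, 0 ≤ RCLike.re (star x ⬝ᵥ A *ᵥ x) := by
  set U := (hA.eigenvectorUnitary : Matrix V V 𝕜)
  let v (i : {i // 0 ≤ hA.eigenvalues i}) : V → 𝕜 := hA.eigenvectorBasis i
  have hUv (i) : star U *ᵥ v i = Pi.single i.1 1 := hA.star_eigenvectorUnitary_mulVec i
  refine ⟨Submodule.span 𝕜 (Set.range v), ?_, fun x hx => ?_⟩
  · have hv : LinearIndependent 𝕜 v := by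
      refine LinearIndependent.of_comp (star U).mulVecLin ?_
      have : ⇑(star U).mulVecLin ∘ v = (Pi.basisFun 𝕜 V) ∘ Subtype.val := by
        ext1 i; simpa using hUv i
      rw [this]
      exact (Pi.basisFun 𝕜 V).linearIndependent.comp _ Subtype.val_injective
    rw [finrank_span_eq_card hv, nonnegIndex_eq_card hA]
  · have h_neg (i) (hi : hA.eigenvalues i < 0) :
        (star (hA.eigenvectorUnitary : Matrix V V 𝕜) *ᵥ x) i = 0 := by
      have h_le : Submodule.span 𝕜 (Set.range v) ≤
          LinearMap.ker (LinearMap.proj i ∘ₗ (star U).mulVecLin) := by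
        rw [Submodule.span_le]
        rintro _ ⟨j, rfl⟩
        have hij : i ≠ j := fun h => hi.not_ge (h ▸ j.2)
        simp [hUv, hij]
      exact h_le hx
    rw [re_dotProduct_mulVec_eq_sum_eigenvalues hA]
    refine sum_nonneg fun i _ => ?_
    rcases le_or_gt 0 (hA.eigenvalues i) with hi | hi
    · positivity
    · simp [h_neg i hi]

theorem nonnegIndex_conjTranspose_mul_mul_le {A : Matrix V V 𝕜} (hA : A.IsHermitian)
    {C : Matrix V W 𝕜} (hC : Function.Injective C.mulVec) :
    nonnegIndex (Cᴴ * A * C) ≤ nonnegIndex A := by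
  obtain ⟨P, hP_rank, hP⟩ := exists_finrank_eq_nonnegIndex (isHermitian_conjTranspose_mul_mul C hA)
  rw [← hP_rank, (Submodule.equivMapOfInjective C.mulVecLin hC P).finrank_eq]
  refine finrank_le_nonnegIndex hA ?_
  rintro _ ⟨x, hx, rfl⟩
  simpa [star_mulVec, dotProduct_mulVec, vecMul_vecMul, Matrix.mul_assoc] using hP x hx

theorem nonnegIndex_submatrix_le {A : Matrix V V 𝕜} (hA : A.IsHermitian) {e : W → V}
    (he : Function.Injective e) : nonnegIndex (A.submatrix e e) ≤ nonnegIndex A := by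
  let C : Matrix V W 𝕜 := (1 : Matrix V V 𝕜).submatrix id e
  have hC (M : Matrix V V 𝕜) : Cᴴ * M * C = M.submatrix e e := by
    ext i j
    simp [C, Matrix.mul_apply, Matrix.one_apply]
  have hCC : Cᴴ * C = 1 := by simpa [submatrix_one _ he] using hC 1
  have h_inj : Function.LeftInverse Cᴴ.mulVec C.mulVec := fun x => by
    rw [mulVec_mulVec, hCC, one_mulVec]
  exact hC A ▸ nonnegIndex_conjTranspose_mul_mul_le hA h_inj.injective

theorem card_add_nonnegIndex_submatrix_le {ι κ : Type*} [Fintype ι] [Fintype κ]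
    [DecidableEq κ] {A : Matrix V V 𝕜} (hA : A.IsHermitian) {f : ι → V} {g : κ → V}
    (hfg : Function.Injective (Sum.elim f g)) (hf_zero : ∀ i i', A (f i) (f i') = 0)
    (hfg_zero : ∀ i k, A (f i) (g k) = 0) :
    Fintype.card ι + nonnegIndex (A.submatrix g g) ≤ nonnegIndex A := by
  classical
  have h_blocks : A.submatrix (Sum.elim f g) (Sum.elim f g) =
      fromBlocks 0 0 0 (A.submatrix g g) := by
    ext (i | k) (i' | k')
    · exact hf_zero i i'
    · exact hfg_zero i k'
    · simp [← hA.apply (g k), hfg_zero]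
    · rfl
  simpa [h_blocks, nonnegIndex_fromBlocks_zero₁₂, nonnegIndex_zero] using
    nonnegIndex_submatrix_le hA hfg

theorem trace_pow_eq_sum_eigenvalues {A : Matrix V V 𝕜} (hA : A.IsHermitian) (k : ℕ) :
    (A ^ k).trace = ∑ i, (hA.eigenvalues i : 𝕜) ^ k := by
  have hUU : star (hA.eigenvectorUnitary : Matrix V V 𝕜) * hA.eigenvectorUnitary = 1 :=
    Unitary.star_mul_self_of_mem hA.eigenvectorUnitary.2
  conv_lhs => rw [hA.spectral_theorem]
  rw [← map_pow, Unitary.conjStarAlgAut_apply, trace_mul_comm, ← Matrix.mul_assoc, hUU,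
    Matrix.one_mul, diagonal_pow, trace_diagonal]
  rfl

theorem sum_eigenvalues_pow {A : Matrix V V 𝕜} (hA : A.IsHermitian) (k : ℕ) :
    ∑ i, hA.eigenvalues i ^ k = RCLike.re (A ^ k).trace := by
  rw [trace_pow_eq_sum_eigenvalues hA, map_sum]
  exact sum_congr rfl fun i _ => by rw [← RCLike.ofReal_pow, RCLike.ofReal_re]

end NonnegIndex

theorem exists_norm_fderiv_le {E : Type*} [NormedAddCommGroup E] [NormedSpace ℝ E] [ProperSpace E]
    {f : E → ℝ} (hf : Differentiable ℝ f) (hf_bdd : BddBelow (Set.range f)) {ε : ℝ} (hε : 0 < ε) :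
    ∃ y, ‖fderiv ℝ f y‖ ≤ ε := by
  -- `f + ε‖·‖` is coercive, and its minimisers are almost critical for `f`.
  obtain ⟨m, hm⟩ := hf_bdd
  have h_coercive : Filter.Tendsto (fun z => f z + ε * ‖z‖) (Filter.cocompact E) Filter.atTop :=
    Filter.tendsto_atTop_add_left_of_le _ m (fun z => hm ⟨z, rfl⟩)
      ((tendsto_norm_cocompact_atTop (E := E)).const_mul_atTop hε)
  have h_cont : Continuous fun z => f z + ε * ‖z‖ := by have := hf.continuous; fun_prop
  obtain ⟨y, hy⟩ := h_cont.exists_forall_le h_coercive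
  have h_lower (v : E) : -(ε * ‖v‖) ≤ fderiv ℝ f y v := by
    refine ge_of_tendsto ((hf y).hasFDerivAt.hasLineDerivAt v).tendsto_slope_zero_right ?_
    filter_upwards [self_mem_nhdsWithin] with t (ht : 0 < t)
    have h_norm : ‖y + t • v‖ ≤ ‖y‖ + t * ‖v‖ := by
      simpa [norm_smul, abs_of_pos ht] using norm_add_le y (t • v)
    have h_min : f y + ε * ‖y‖ ≤ f (y + t • v) + ε * (‖y‖ + t * ‖v‖) :=
      (hy _).trans (by gcongr)
    rw [smul_eq_mul, inv_mul_eq_div, le_div_iff₀ ht]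
    linarith
  refine ⟨y, ContinuousLinearMap.opNorm_le_bound _ hε.le fun v => abs_le.2 ⟨h_lower v, ?_⟩⟩
  simpa [neg_le] using h_lower (-v)

section Scaling

variable {V : Type*} [Fintype V]

/-- The potential whose gradient at `y` has `i`-th coordinate `∑ j, dᵢ Sᵢⱼ dⱼ - r`, where
`dᵢ = exp yᵢ` and `S` is symmetric. Its critical points are the diagonal scalings of `S` all of
whose row sums are `r`. -/
noncomputable def scalingPotential (S : Matrix V V ℝ) (r : ℝ) (y : V → ℝ) : ℝ :=
  (∑ i, ∑ j, S i j * Real.exp (y i + y j)) / 2 - r * ∑ i, y i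

theorem hasLineDerivAt_scalingPotential [DecidableEq V] {S : Matrix V V ℝ} (hS : S.IsSymm)
    (r : ℝ) (y : V → ℝ) (k : V) :
    HasLineDerivAt ℝ (scalingPotential S r) (∑ j, S k j * Real.exp (y k + y j) - r) y
      (Pi.single k 1) := by
  let e : V → ℝ := Pi.single k 1
  have h_coord (i : V) : HasDerivAt (fun t : ℝ => (y + t • e) i) (e i) 0 := by
    simpa using ((hasDerivAt_id (0 : ℝ)).mul_const (e i)).const_add (y i)
  have h_exp (i j : V) : HasDerivAt (fun t : ℝ => S i j * Real.exp ((y + t • e) i + (y + t • e) j))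
      (S i j * (Real.exp (y i + y j) * (e i + e j))) 0 := by
    simpa using (((h_coord i).add (h_coord j)).exp).const_mul (S i j)
  have h_sum : ∑ i, ∑ j, S i j * (Real.exp (y i + y j) * (e i + e j)) =
      2 * ∑ j, S k j * Real.exp (y k + y j) := by
    simp only [mul_add, sum_add_distrib, two_mul]
    congr 1
    · rw [sum_comm]; simp [e, Pi.single_apply]
    · simp [e, Pi.single_apply, hS.apply, add_comm (y k)]
  have h_deriv := ((HasDerivAt.fun_sum fun i (_ : i ∈ univ) => HasDerivAt.fun_sum
    fun j (_ : j ∈ univ) => h_exp i j).div_const 2).fun_sub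
      ((HasDerivAt.fun_sum fun i (_ : i ∈ univ) => h_coord i).const_mul r)
  exact h_deriv.congr_deriv (by simp [h_sum, e])

theorem bddBelow_range_scalingPotential {S : Matrix V V ℝ} (hS : ∀ i j, 0 ≤ S i j) {σ : V → V}
    (hσ : Function.Injective σ) (hSσ : ∀ i, 0 < S i (σ i)) {r : ℝ} (hr : 0 < r) :
    BddBelow (Set.range (scalingPotential S r)) := by
  refine ⟨∑ i, r / 2 * (Real.log (S i (σ i) / r) + 1), ?_⟩
  rintro _ ⟨y, rfl⟩
  have h_row (i : V) : r * (y i + y (σ i) + (Real.log (S i (σ i) / r) + 1)) ≤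
      ∑ j, S i j * Real.exp (y i + y j) :=
    calc r * (y i + y (σ i) + (Real.log (S i (σ i) / r) + 1))
        = r * (y i + y (σ i) + Real.log (S i (σ i) / r) + 1) := by ring
      _ ≤ r * Real.exp (y i + y (σ i) + Real.log (S i (σ i) / r)) := by
        gcongr; exact Real.add_one_le_exp _
      _ = S i (σ i) * Real.exp (y i + y (σ i)) := by
        rw [Real.exp_add, Real.exp_log (div_pos (hSσ i) hr)]; field_simp
      _ ≤ ∑ j, S i j * Real.exp (y i + y j) :=
        single_le_sum (f := fun j => S i j * Real.exp (y i + y j))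
          (fun j _ => mul_nonneg (hS i j) (Real.exp_nonneg _)) (mem_univ (σ i))
  have h_perm : ∑ i, y (σ i) = ∑ i, y i :=
    Equiv.sum_comp (Equiv.ofBijective σ (Finite.injective_iff_bijective.1 hσ)) y
  have h_sum := sum_le_sum fun i (_ : i ∈ univ) => h_row i
  rw [← mul_sum, sum_add_distrib, sum_add_distrib, h_perm] at h_sum
  rw [scalingPotential, ← mul_sum]
  linarith

theorem exists_pos_abs_sum_mul_sub_le {S : Matrix V V ℝ} (hS_symm : S.IsSymm)
    (hS : ∀ i j, 0 ≤ S i j) {σ : V → V} (hσ : Function.Injective σ) (hSσ : ∀ i, 0 < S i (σ i))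
    {r : ℝ} (hr : 0 < r) {ε : ℝ} (hε : 0 < ε) :
    ∃ d : V → ℝ, (∀ i, 0 < d i) ∧ ∀ i, |∑ j, d i * S i j * d j - r| ≤ ε := by
  classical
  have h_diff : Differentiable ℝ (scalingPotential S r) := by
    unfold scalingPotential; fun_prop
  obtain ⟨y, hy⟩ :=
    exists_norm_fderiv_le h_diff (bddBelow_range_scalingPotential hS hσ hSσ hr) hε
  refine ⟨fun i => Real.exp (y i), fun i => Real.exp_pos _, fun i => ?_⟩
  have h_partial : fderiv ℝ (scalingPotential S r) y (Pi.single i 1) =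
      ∑ j, S i j * Real.exp (y i + y j) - r :=
    ((h_diff y).hasFDerivAt.hasLineDerivAt _).unique (hasLineDerivAt_scalingPotential hS_symm r y i)
  calc |∑ j, Real.exp (y i) * S i j * Real.exp (y j) - r|
      = ‖fderiv ℝ (scalingPotential S r) y (Pi.single i 1)‖ := by
        simp only [h_partial, Real.exp_add, Real.norm_eq_abs, mul_assoc, mul_left_comm]
    _ ≤ ‖fderiv ℝ (scalingPotential S r) y‖ * ‖(Pi.single i 1 : V → ℝ)‖ :=
        ContinuousLinearMap.le_opNorm _ _
    _ ≤ ε := by simpa [Pi.norm_single] using hy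

end Scaling

theorem exists_injective_or_card_biUnion_lt {V : Type*} [DecidableEq V] {t : V → Finset V}
    (ht : ∀ i j, j ∈ t i → i ∈ t j) :
    (∃ σ : V → V, Function.Injective σ ∧ ∀ i, σ i ∈ t i) ∨
      ∃ T : Finset V, Disjoint T (T.biUnion t) ∧ #(T.biUnion t) < #T := by
  rw [← all_card_le_biUnion_card_iff_exists_injective, or_iff_not_imp_left]
  intro h_hall
  push Not at h_hall
  obtain ⟨s, hs⟩ := h_hall
  have h_sub : (s \ s.biUnion t).biUnion t ⊆ s.biUnion t \ s := by
    intro v hv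
    obtain ⟨u, hu, huv⟩ := mem_biUnion.1 hv
    rw [mem_sdiff] at hu ⊢
    exact ⟨mem_biUnion.2 ⟨u, hu.1, huv⟩, fun hvs => hu.2 (mem_biUnion.2 ⟨v, hvs, ht u v huv⟩)⟩
  refine ⟨s \ s.biUnion t, disjoint_sdiff_self_left.mono_right (h_sub.trans sdiff_subset), ?_⟩
  exact (card_le_card h_sub).trans_lt (card_sdiff_lt_card_sdiff_iff.2 hs)

theorem two_mul_add_three_mul_sq_sub_pow_four_le (x : ℝ) :
    2 * x + 3 * x ^ 2 - x ^ 4 ≤ 9 / 4 + 3 * Real.sqrt 3 / 2 := by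
  have h3 : Real.sqrt 3 ^ 2 = 3 := Real.sq_sqrt (by norm_num)
  have h_factor : 9 / 4 + 3 * Real.sqrt 3 / 2 - (2 * x + 3 * x ^ 2 - x ^ 4) =
      (x - (1 + Real.sqrt 3) / 2) ^ 2 * ((x + (1 + Real.sqrt 3) / 2) ^ 2 + (Real.sqrt 3 - 1)) := by
    linear_combination
      (x ^ 2 / 2 + x - (Real.sqrt 3 ^ 2 + 8 * Real.sqrt 3 + 13) / 16) * h3
  have h_nonneg : 0 ≤ Real.sqrt 3 - 1 := sub_nonneg.2 (Real.one_le_sqrt.2 (by norm_num))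
  rw [← sub_nonneg, h_factor]
  positivity

theorem two_mul_add_three_mul_sq_sub_pow_four_nonpos {x : ℝ} (hx : x ≤ 0) :
    2 * x + 3 * x ^ 2 - x ^ 4 ≤ 0 := by
  have h_factor : 2 * x + 3 * x ^ 2 - x ^ 4 = x * ((2 - x) * (x + 1) ^ 2) := by ring
  rw [h_factor]
  exact mul_nonpos_of_nonpos_of_nonneg hx (mul_nonneg (by linarith) (sq_nonneg _))

section WeightedAdjacency

open RCLike (re)

variable {V W 𝕜 : Type*} [RCLike 𝕜] {G : SimpleGraph V} {A : Matrix V V 𝕜}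

theorem C4Free.subsingleton_commonNeighbors (hG : C4Free G) {i j : V} (hij : i ≠ j) :
    (G.commonNeighbors i j).Subsingleton := by
  rintro k ⟨hik, hjk⟩ l ⟨hil, hjl⟩
  rw [SimpleGraph.mem_neighborSet] at hik hjk hil hjl
  by_contra hkl
  exact hG i k j l hik.ne hij hil.ne hjk.ne' hkl hjl.ne hik hjk.symm hjl hil.symm

theorem C4Free.comap (hG : C4Free G) {f : W → V} (hf : Function.Injective f) :
    C4Free (G.comap f) := fun a b c d hab hac had hbc hbd hcd =>
  hG (f a) (f b) (f c) (f d) (hf.ne hab) (hf.ne hac) (hf.ne had) (hf.ne hbc) (hf.ne hbd)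
    (hf.ne hcd)

theorem norm_sum_pow_of_subsingleton_support {ι E : Type*} [Fintype ι]
    [SeminormedAddCommGroup E] {f : ι → E} (hf : f.support.Subsingleton) {n : ℕ} (hn : n ≠ 0) :
    ‖∑ i, f i‖ ^ n = ∑ i, ‖f i‖ ^ n := by
  by_cases h : ∃ k, f k ≠ 0
  · obtain ⟨k, hk⟩ := h
    have h_zero (i : ι) (hik : i ≠ k) : f i = 0 := by
      by_contra hi
      exact hik (hf hi hk)
    rw [Fintype.sum_eq_single k h_zero, Fintype.sum_eq_single k fun i hi => by
      simp [h_zero i hi, hn]]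
  · push Not at h
    simp [h, hn]

/-- The squared Euclidean norm of the `i`-th row of `A`. For a weighted adjacency matrix this is the
weighted degree of the vertex `i`. -/
def rowNormSq [Fintype W] (A : Matrix V W 𝕜) (i : V) : ℝ :=
  ∑ j, ‖A i j‖ ^ 2

theorem mul_self_apply_self [Fintype V] (hA : A.IsHermitian) (i : V) :
    (A * A) i i = (rowNormSq A i : 𝕜) := by
  simp_rw [rowNormSq, mul_apply, RCLike.ofReal_sum, RCLike.ofReal_pow, ← RCLike.mul_conj]
  exact sum_congr rfl fun j _ => by rw [← hA.apply j i, RCLike.star_def]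

theorem re_trace_sq [Fintype V] [DecidableEq V] (hA : A.IsHermitian) :
    re (A ^ 2).trace = ∑ i, rowNormSq A i := by
  simp [trace, sq, mul_self_apply_self hA]

/-- `A` is a Hermitian weighted adjacency matrix of `G`. The weight of an edge is allowed to be
`0`. -/
structure IsHermitianWeightedAdj (G : SimpleGraph V) (A : Matrix V V 𝕜) : Prop where
  isHermitian : A.IsHermitian
  eq_zero_of_not_adj : ∀ i j, ¬ G.Adj i j → A i j = 0

namespace IsHermitianWeightedAdj

theorem adj_of_ne_zero (h : IsHermitianWeightedAdj G A) {i j : V} (hij : A i j ≠ 0) :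
    G.Adj i j :=
  not_not.1 (mt (h.eq_zero_of_not_adj i j) hij)

theorem submatrix (h : IsHermitianWeightedAdj G A) (f : W → V) :
    IsHermitianWeightedAdj (G.comap f) (A.submatrix f f) :=
  ⟨h.isHermitian.submatrix f, fun i j => h.eq_zero_of_not_adj (f i) (f j)⟩

variable [Fintype V]

theorem diagonal_mul_mul_diagonal [DecidableEq V] (h : IsHermitianWeightedAdj G A) (d : V → 𝕜) :
    IsHermitianWeightedAdj G ((diagonal d)ᴴ * A * diagonal d) where
  isHermitian := isHermitian_conjTranspose_mul_mul _ h.isHermitian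
  eq_zero_of_not_adj i j hij := by
    simp [diagonal_conjTranspose, h.eq_zero_of_not_adj i j hij]

theorem trace_eq_zero (h : IsHermitianWeightedAdj G A) : A.trace = 0 :=
  sum_eq_zero fun i _ => h.eq_zero_of_not_adj i i (SimpleGraph.irrefl G)

variable [DecidableEq V]

theorem norm_sq_apply_sq_of_ne (h : IsHermitianWeightedAdj G A) (hG : C4Free G) {i j : V}
    (hij : i ≠ j) : ‖(A ^ 2) i j‖ ^ 2 = ∑ k, ‖A i k‖ ^ 2 * ‖A k j‖ ^ 2 := by
  have h_support : Function.support (fun k => A i k * A k j) ⊆ G.commonNeighbors i j := fun k hk =>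
    ⟨h.adj_of_ne_zero (left_ne_zero_of_mul hk), (h.adj_of_ne_zero (right_ne_zero_of_mul hk)).symm⟩
  rw [sq A, mul_apply, norm_sum_pow_of_subsingleton_support
    ((hG.subsingleton_commonNeighbors hij).anti h_support) two_ne_zero]
  simp only [norm_mul, mul_pow]

theorem rowNormSq_sq_le (h : IsHermitianWeightedAdj G A) (hG : C4Free G) (i : V) :
    rowNormSq (A ^ 2) i ≤ rowNormSq A i ^ 2 + ∑ k, ‖A i k‖ ^ 2 * rowNormSq A k := by
  have h_entry (j : V) : ‖(A ^ 2) i j‖ ^ 2 ≤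
      (if i = j then rowNormSq A i ^ 2 else 0) + ∑ k, ‖A i k‖ ^ 2 * ‖A k j‖ ^ 2 := by
    split_ifs with hij
    · subst hij
      rw [sq A, mul_self_apply_self h.isHermitian, RCLike.norm_ofReal, sq_abs]
      exact le_add_of_nonneg_right (by positivity)
    · rw [h.norm_sq_apply_sq_of_ne hG hij, zero_add]
  calc rowNormSq (A ^ 2) i
      ≤ ∑ j, ((if i = j then rowNormSq A i ^ 2 else 0) + ∑ k, ‖A i k‖ ^ 2 * ‖A k j‖ ^ 2) :=
        sum_le_sum fun j _ => h_entry j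
    _ = rowNormSq A i ^ 2 + ∑ k, ‖A i k‖ ^ 2 * rowNormSq A k := by
        rw [sum_add_distrib, sum_comm]
        simp [rowNormSq, mul_sum]

theorem re_trace_pow_four_le (h : IsHermitianWeightedAdj G A) (hG : C4Free G) :
    re (A ^ 4).trace ≤ 2 * ∑ i, rowNormSq A i ^ 2 := by
  have h_col (k : V) : ∑ i, ‖A i k‖ ^ 2 = rowNormSq A k :=
    sum_congr rfl fun i _ => by rw [← h.isHermitian.apply i k, norm_star]
  calc re (A ^ 4).trace = ∑ i, rowNormSq (A ^ 2) i := by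
        rw [← re_trace_sq (h.isHermitian.pow 2), ← pow_mul]
    _ ≤ ∑ i, (rowNormSq A i ^ 2 + ∑ k, ‖A i k‖ ^ 2 * rowNormSq A k) :=
        sum_le_sum fun i _ => h.rowNormSq_sq_le hG i
    _ = 2 * ∑ i, rowNormSq A i ^ 2 := by
        rw [sum_add_distrib, sum_comm]
        simp only [← sum_mul, h_col, ← sq, ← two_mul]

theorem three_mul_sum_rowNormSq_sub_le (h : IsHermitianWeightedAdj G A) (hG : C4Free G) :
    3 * ∑ i, rowNormSq A i - 2 * ∑ i, rowNormSq A i ^ 2 ≤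
      (9 / 4 + 3 * Real.sqrt 3 / 2) * nonnegIndex A := by
  have hA := h.isHermitian
  have h_one : ∑ i, hA.eigenvalues i = 0 := by
    simpa [h.trace_eq_zero] using sum_eigenvalues_pow hA 1
  have h_two := (sum_eigenvalues_pow hA 2).trans (re_trace_sq hA)
  have h_four := (sum_eigenvalues_pow hA 4).trans_le (h.re_trace_pow_four_le hG)
  calc 3 * ∑ i, rowNormSq A i - 2 * ∑ i, rowNormSq A i ^ 2
      ≤ 2 * ∑ i, hA.eigenvalues i + 3 * ∑ i, hA.eigenvalues i ^ 2 - ∑ i, hA.eigenvalues i ^ 4 := by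
        linarith
    _ = ∑ i, (2 * hA.eigenvalues i + 3 * hA.eigenvalues i ^ 2 - hA.eigenvalues i ^ 4) := by
        simp only [sum_sub_distrib, sum_add_distrib, mul_sum]
    _ ≤ ∑ i, if 0 ≤ hA.eigenvalues i then 9 / 4 + 3 * Real.sqrt 3 / 2 else 0 := by
        gcongr with i
        split_ifs with hi
        · exact two_mul_add_three_mul_sq_sub_pow_four_le _
        · exact two_mul_add_three_mul_sq_sub_pow_four_nonpos (not_le.1 hi).le
    _ = (9 / 4 + 3 * Real.sqrt 3 / 2) * nonnegIndex A := by
        rw [← sum_filter, sum_const, nsmul_eq_mul, nonnegIndex_eq_card hA, Fintype.card_subtype,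
          mul_comm]

theorem sub_mul_card_le_nonnegIndex (h : IsHermitianWeightedAdj G A) (hG : C4Free G) {σ : V → V}
    (hσ : Function.Injective σ) (hAσ : ∀ i, A i (σ i) ≠ 0) {ε : ℝ} (hε : 0 < ε) :
    (9 / 8 - 2 * ε ^ 2) * Fintype.card V ≤ (9 / 4 + 3 * Real.sqrt 3 / 2) * nonnegIndex A := by
  obtain ⟨d, hd_pos, hd⟩ := exists_pos_abs_sum_mul_sub_le (S := fun i j => ‖A i j‖ ^ 2)
    (IsSymm.ext fun i j => by simp [← h.isHermitian.apply i j]) (fun i j => sq_nonneg _) hσ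
    (fun i => pow_pos (norm_pos_iff.2 (hAσ i)) 2) (r := 3 / 4) (by norm_num) hε
  set D : Matrix V V 𝕜 := diagonal fun i => (Real.sqrt (d i) : 𝕜)
  have h_row (i : V) : rowNormSq (Dᴴ * A * D) i = ∑ j, d i * ‖A i j‖ ^ 2 * d j := by
    simp [rowNormSq, D, diagonal_conjTranspose, mul_pow, (hd_pos _).le]
  have hD : Function.Injective D.mulVec := by
    refine mulVec_injective_of_isUnit (isUnit_diagonal.2 (Pi.isUnit_iff.2 fun i => ?_))
    simpa [Real.sqrt_eq_zero'] using hd_pos i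
  calc (9 / 8 - 2 * ε ^ 2) * Fintype.card V = ∑ _i : V, (9 / 8 - 2 * ε ^ 2) := by
        rw [sum_const, card_univ, nsmul_eq_mul, mul_comm]
    _ ≤ ∑ i, (3 * rowNormSq (Dᴴ * A * D) i - 2 * rowNormSq (Dᴴ * A * D) i ^ 2) := by
        refine sum_le_sum fun i _ => ?_
        have h_sq : (rowNormSq (Dᴴ * A * D) i - 3 / 4) ^ 2 ≤ ε ^ 2 :=
          sq_le_sq' (abs_le.1 (h_row i ▸ hd i)).1 (abs_le.1 (h_row i ▸ hd i)).2
        linarith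
    _ = 3 * ∑ i, rowNormSq (Dᴴ * A * D) i - 2 * ∑ i, rowNormSq (Dᴴ * A * D) i ^ 2 := by
        simp only [sum_sub_distrib, mul_sum]
    _ ≤ (9 / 4 + 3 * Real.sqrt 3 / 2) * nonnegIndex (Dᴴ * A * D) :=
        (h.diagonal_mul_mul_diagonal _).three_mul_sum_rowNormSq_sub_le hG
    _ ≤ (9 / 4 + 3 * Real.sqrt 3 / 2) * nonnegIndex A := by
        gcongr
        exact nonnegIndex_conjTranspose_mul_mul_le h.isHermitian hD

theorem mul_card_le_nonnegIndex_of_injective (h : IsHermitianWeightedAdj G A) (hG : C4Free G)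
    {σ : V → V} (hσ : Function.Injective σ) (hAσ : ∀ i, A i (σ i) ≠ 0) :
    (Real.sqrt 3 - 3 / 2) * Fintype.card V ≤ nonnegIndex A := by
  have h_lim : Filter.Tendsto (fun ε : ℝ => (9 / 8 - 2 * ε ^ 2) * (Fintype.card V : ℝ))
      (nhdsWithin 0 (Set.Ioi 0)) (nhds (9 / 8 * (Fintype.card V : ℝ))) :=
    (Continuous.tendsto' (by fun_prop) _ _ (by simp)).mono_left nhdsWithin_le_nhds
  have h_le : 9 / 8 * (Fintype.card V : ℝ) ≤ (9 / 4 + 3 * Real.sqrt 3 / 2) * nonnegIndex A :=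
    le_of_tendsto h_lim (Filter.Eventually.mono self_mem_nhdsWithin fun ε hε =>
      h.sub_mul_card_le_nonnegIndex hG hσ hAσ hε)
  have h_const : (9 / 4 + 3 * Real.sqrt 3 / 2) * (Real.sqrt 3 - 3 / 2) = 9 / 8 := by
    have h3 : Real.sqrt 3 ^ 2 = 3 := Real.sq_sqrt (by norm_num)
    linear_combination 3 / 2 * h3
  rw [← h_const, mul_assoc] at h_le
  exact le_of_mul_le_mul_left h_le (by positivity)

theorem card_add_nonnegIndex_compl_le (h : IsHermitianWeightedAdj G A) {T M : Finset V}
    (hTM : Disjoint T M) (hT : ∀ i ∈ T, ∀ j, A i j ≠ 0 → j ∈ M) :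
    #T + nonnegIndex (A.submatrix ((↑) : ↥(T ∪ M)ᶜ → V) (↑)) ≤ nonnegIndex A := by
  have h_inj : Function.Injective (Sum.elim ((↑) : T → V) ((↑) : ↥(T ∪ M)ᶜ → V)) :=
    Subtype.val_injective.sumElim Subtype.val_injective fun i k hik =>
      mem_compl.1 k.2 (hik ▸ mem_union_left M i.2)
  have h_zero (i : T) {j : V} (hj : j ∉ M) : A i j = 0 :=
    of_not_not fun hij => hj (hT i i.2 j hij)
  simpa using card_add_nonnegIndex_submatrix_le h.isHermitian h_inj
    (fun i j => h_zero i (disjoint_left.1 hTM j.2))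
    (fun i k => h_zero i fun hk => mem_compl.1 k.2 (mem_union_right T hk))

end IsHermitianWeightedAdj

end WeightedAdjacency

theorem inertia_bound_C4_free_general {V 𝕜 : Type*} [Fintype V] [DecidableEq V] [RCLike 𝕜]
    {G : SimpleGraph V} (hG : C4Free G) {A : Matrix V V 𝕜} (h : IsHermitianWeightedAdj G A) :
    (Real.sqrt 3 - 3 / 2) * Fintype.card V ≤ nonnegIndex A := by
  classical
  induction hn : Fintype.card V using Nat.strong_induction_on generalizing V with
  | _ n ih =>
  have hA_symm (i j : V) (hij : A i j ≠ 0) : A j i ≠ 0 := by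
    simpa [← h.isHermitian.apply i j] using hij
  let t (i : V) : Finset V := {j | A i j ≠ 0}
  rcases exists_injective_or_card_biUnion_lt (t := t) (by simpa [t] using hA_symm) with
    ⟨σ, hσ, hσt⟩ | ⟨T, hT_disj, hT_card⟩
  · exact hn ▸ h.mul_card_le_nonnegIndex_of_injective hG hσ fun i => by simpa [t] using hσt i
  · set M := T.biUnion t
    have h_reduce := h.card_add_nonnegIndex_compl_le hT_disj fun i hi j hij =>
      mem_biUnion.2 ⟨i, hi, by simpa [t] using hij⟩
    have h_card : #(T ∪ M)ᶜ + (#T + #M) = n := by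
      rw [← card_union_of_disjoint hT_disj, card_compl_add_card, hn]
    have h_rest := ih #(T ∪ M)ᶜ (by omega) (hG.comap Subtype.val_injective) (h.submatrix _)
      (Fintype.card_coe _)
    have h_half : Real.sqrt 3 - 3 / 2 ≤ 1 / 2 := by
      linarith [Real.sqrt_le_iff (x := 3) (y := 2) |>.2 (by norm_num)]
    have h_removed : (Real.sqrt 3 - 3 / 2) * (#T + #M) ≤ #T :=
      calc (Real.sqrt 3 - 3 / 2) * (#T + #M) ≤ 1 / 2 * (#T + #T) := by gcongr
        _ = #T := by ring
    calc (Real.sqrt 3 - 3 / 2) * (n : ℝ)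
        = (Real.sqrt 3 - 3 / 2) * (#T + #M) + (Real.sqrt 3 - 3 / 2) * #(T ∪ M)ᶜ := by
          rw [← h_card]; push_cast; ring
      _ ≤ #T + nonnegIndex (A.submatrix ((↑) : ↥(T ∪ M)ᶜ → V) (↑)) := add_le_add h_removed h_rest
      _ ≤ nonnegIndex A := mod_cast h_reduce

/-- If `G` is a `C4`-free graph on `n` vertices, then every Hermitian weighted adjacency
matrix of `G` has at least `β n` non-negative eigenvalues, where `β = √3 - 3/2`. -/
theorem inertia_bound_C4_free (n : ℕ) (G : SimpleGraph (Fin n)) (hG : C4Free G)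
    (A : Matrix (Fin n) (Fin n) ℂ) (hA : A.IsHermitian)
    (hsupp : ∀ i j, ¬ G.Adj i j → A i j = 0) :
    (Real.sqrt 3 - 3 / 2) * n ≤ (Fintype.card {i : Fin n // 0 ≤ hA.eigenvalues i} : ℝ) := by
  simpa [nonnegIndex_eq_card hA] using inertia_bound_C4_free_general hG ⟨hA, hsupp⟩
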